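/- If ν is a σ-ergodic Borel probability measure on Σ, then ν is either Q-regular or Q-singular. -/

import Mathlib

open MeasureTheory ProbabilityTheory Filter Set
open scoped ENNReal

noncomputable section

/-- The one-sided symbolic space over the alphabet `{0, …, b-1}`. -/
abbrev SymbSpace (b : ℕ) : Type := ℕ → Fin b

/-- The cylinder `[w]` of sequences starting with the finite word `w`. -/
def cylinder {b : ℕ} (w : List (Fin b)) : Set (SymbSpace b) :=
  {x | ∀ i : Fin w.length, x i = w.get i}

/-- The prefix `x|_n` of `x` of length `n`, as a finite word. -/
def wordPrefix {b : ℕ} (x : SymbSpace b) (n : ℕ) : List (Fin b) :=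
  List.ofFn (fun i : Fin n => x i)

/-- `Y_w = X_{w_1} X_{w_1w_2} ⋯ X_{w_1⋯w_n}`. -/
def cascadeY {b : ℕ} {Ω : Type*} (X : List (Fin b) → Ω → ℝ) (w : List (Fin b)) (ω : Ω) : ℝ :=
  ∏ k ∈ Finset.range w.length, X (w.take (k + 1)) ω

/-- The total mass `Z_n = ∑_{|u| = n} Y_u ν([u])`. -/
def cascadeZ {b : ℕ} {Ω : Type*} (X : List (Fin b) → Ω → ℝ) (ν : Measure (SymbSpace b))
    (n : ℕ) (ω : Ω) : ℝ :=
  ∑ u : Fin n → Fin b, cascadeY X (List.ofFn u) ω * (ν (cylinder (List.ofFn u))).toReal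

/-- `Z = limsup_n Z_n`. -/
def cascadeZlim {b : ℕ} {Ω : Type*} (X : List (Fin b) → Ω → ℝ) (ν : Measure (SymbSpace b))
    (ω : Ω) : ℝ :=
  Filter.limsup (fun n => cascadeZ X ν n ω) atTop

/-- Assumption (M1): the weights `X_u`, `u` a nonempty finite word, are i.i.d. with common
law that of the nonnegative random variable `X₀` of expectation 1. -/
structure CascadeM1 {b : ℕ} {Ω : Type*} [MeasurableSpace Ω] (P : Measure Ω)
    (X : List (Fin b) → Ω → ℝ) (X₀ : Ω → ℝ) : Prop where
  meas : ∀ w, Measurable (X w)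
  nonneg : ∀ w ω, 0 ≤ X w ω
  meas₀ : Measurable X₀
  nonneg₀ : ∀ ω, 0 ≤ X₀ ω
  mean₀ : ∫ ω, X₀ ω ∂P = 1
  indep : iIndepFun (m := fun _ => inferInstance)
    (fun w : {w : List (Fin b) // w ≠ []} => X w.1) P
  ident : ∀ w : List (Fin b), w ≠ [] → IdentDistrib (X w) X₀ P P

/-- `h_X = E(X log X) ∈ [0, ∞]` (well defined since `x log x ≥ -e⁻¹` and, by convexity,
`E(X log X) ≥ E(X) log E(X) = 0`), encoded as an extended nonnegative real. -/
def entropyX {Ω : Type*} [MeasurableSpace Ω] (P : Measure Ω) (X₀ : Ω → ℝ) : ℝ≥0∞ :=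
  (∫⁻ ω, ENNReal.ofReal (X₀ ω * Real.log (X₀ ω)) ∂P) -
    (∫⁻ ω, ENNReal.ofReal (-(X₀ ω * Real.log (X₀ ω))) ∂P)

/-- The lower local dimension `liminf_n (-log ν([x|_n]) / n)` of `ν` at `x`, valued
in `[0, ∞]`. -/
def lowerLocalDim {b : ℕ} (ν : Measure (SymbSpace b)) (x : SymbSpace b) : ℝ≥0∞ :=
  Filter.liminf
    (fun n : ℕ => ENNReal.ofReal (-Real.log ((ν (cylinder (wordPrefix x n))).toReal) / n))
    atTop

/-- The upper local dimension `limsup_n (-log ν([x|_n]) / n)` of `ν` at `x`. -/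
def upperLocalDim {b : ℕ} (ν : Measure (SymbSpace b)) (x : SymbSpace b) : ℝ≥0∞ :=
  Filter.limsup
    (fun n : ℕ => ENNReal.ofReal (-Real.log ((ν (cylinder (wordPrefix x n))).toReal) / n))
    atTop

/-- The lower Hausdorff dimension of `ν`: the `ν`-essential infimum of the lower local
dimension. -/
def lowerHausdorffDim {b : ℕ} (ν : Measure (SymbSpace b)) : ℝ≥0∞ :=
  essInf (lowerLocalDim ν) ν

/-- The upper Hausdorff dimension of `ν`: the `ν`-essential supremum of the lower local
dimension. -/
def upperHausdorffDim {b : ℕ} (ν : Measure (SymbSpace b)) : ℝ≥0∞ :=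
  essSup (lowerLocalDim ν) ν

/-- The upper packing dimension of `ν`: the `ν`-essential supremum of the upper local
dimension. -/
def upperPackingDim {b : ℕ} (ν : Measure (SymbSpace b)) : ℝ≥0∞ :=
  essSup (upperLocalDim ν) ν


/-- The left shift on the one-sided symbolic space. -/
def shiftMap (b : ℕ) : SymbSpace b → SymbSpace b := fun x n => x (n + 1)

/-! ### Deterministic part -/

section Cascade

variable {b : ℕ}

/-- Cascade product for a deterministic array of weights. -/
def cY (a : List (Fin b) → ℝ) (w : List (Fin b)) : ℝ :=
  ∏ k ∈ Finset.range w.length, a (w.take (k + 1))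

/-- Total mass of the level-`n` cascade measure. -/
def cM (n : ℕ) (a : List (Fin b) → ℝ) (μ : Measure (SymbSpace b)) : ℝ≥0∞ :=
  ∫⁻ x, ENNReal.ofReal (cY a (wordPrefix x n)) ∂μ

/-- Lower limit of the total masses. -/
def cL (a : List (Fin b) → ℝ) (μ : Measure (SymbSpace b)) : ℝ≥0∞ :=
  liminf (fun n => cM n a μ) atTop

/-- Iterated shift. -/
def sh (k : ℕ) (x : SymbSpace b) : SymbSpace b := fun n => x (k + n)

/-- Projection to the first `n` letters. -/
def pj (n : ℕ) (x : SymbSpace b) : Fin n → Fin b := fun i => x i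

lemma measurable_sh (k : ℕ) : Measurable (sh (b := b) k) := by
  unfold sh; fun_prop

lemma measurable_pj (n : ℕ) : Measurable (pj (b := b) n) := by
  unfold pj; fun_prop

lemma wordPrefix_eq (x : SymbSpace b) (n : ℕ) : wordPrefix x n = List.ofFn (pj n x) := rfl

lemma cylinder_ofFn {n : ℕ} (u : Fin n → Fin b) :
    cylinder (List.ofFn u) = pj n ⁻¹' {u} := by
  ext x
  simp only [_root_.cylinder, mem_ofPred_eq, mem_preimage, mem_singleton_iff, List.get_ofFn]
  constructor
  · intro h
    funext i
    have := h (Fin.cast (by simp) i)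
    simpa [pj] using this
  · rintro rfl i
    simp [pj]

lemma exists_ofFn (w : List (Fin b)) : ∃ u : Fin w.length → Fin b, w = List.ofFn u :=
  ⟨w.get, (List.ofFn_get w).symm⟩

lemma measurableSet_cylinder (w : List (Fin b)) : MeasurableSet (cylinder w) := by
  obtain ⟨u, hu⟩ := exists_ofFn w
  rw [hu, cylinder_ofFn]
  exact measurable_pj _ (MeasurableSet.singleton _)

lemma mem_cylinder_iff (w : List (Fin b)) (x : SymbSpace b) :
    x ∈ cylinder w ↔ wordPrefix x w.length = w := by
  obtain ⟨u, hu⟩ := exists_ofFn w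
  conv_lhs => rw [hu, cylinder_ofFn]
  conv_rhs => rhs; rw [hu]
  rw [wordPrefix_eq]
  simp

lemma cylinder_nil : cylinder ([] : List (Fin b)) = univ := by
  ext x; simp [_root_.cylinder]

lemma wordPrefix_add (x : SymbSpace b) (k n : ℕ) :
    wordPrefix x (k + n) = wordPrefix x k ++ wordPrefix (sh k x) n := by
  unfold wordPrefix sh
  rw [List.ofFn_add]
  rfl

lemma length_wordPrefix (x : SymbSpace b) (n : ℕ) : (wordPrefix x n).length = n := by
  simp [wordPrefix]

lemma mem_cylinder_append (w v : List (Fin b)) (x : SymbSpace b) :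
    x ∈ cylinder (w ++ v) ↔ x ∈ cylinder w ∧ sh w.length x ∈ cylinder v := by
  simp only [mem_cylinder_iff, List.length_append, wordPrefix_add]
  constructor
  · intro h
    exact List.append_inj h (by simp [length_wordPrefix])
  · rintro ⟨h1, h2⟩
    rw [h1, h2]

lemma cY_append (a : List (Fin b) → ℝ) (w u : List (Fin b)) :
    cY a (w ++ u) = cY a w * cY (fun v => a (w ++ v)) u := by
  unfold cY
  rw [List.length_append, Finset.prod_range_add]
  congr 1
  · refine Finset.prod_congr rfl fun k hk => ?_
    rw [Finset.mem_range] at hk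
    rw [List.take_append_of_le_length (by omega)]
  · refine Finset.prod_congr rfl fun k hk => ?_
    rw [add_assoc, List.take_length_add_append]

lemma cM_eq_sum (n : ℕ) (a : List (Fin b) → ℝ) (μ : Measure (SymbSpace b)) :
    cM n a μ = ∑ u : Fin n → Fin b,
      ENNReal.ofReal (cY a (List.ofFn u)) * μ (cylinder (List.ofFn u)) := by
  unfold cM
  simp only [wordPrefix_eq]
  rw [← lintegral_map (f := fun u : Fin n → Fin b => ENNReal.ofReal (cY a (List.ofFn u)))
    (measurable_of_finite _) (measurable_pj n), lintegral_fintype]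
  refine Finset.sum_congr rfl fun u _ => ?_
  rw [Measure.map_apply (measurable_pj n) (MeasurableSet.singleton _), cylinder_ofFn]

lemma measurable_cY_wordPrefix (n : ℕ) (a : List (Fin b) → ℝ) :
    Measurable fun x : SymbSpace b => ENNReal.ofReal (cY a (wordPrefix x n)) :=
  (measurable_of_finite (fun u : Fin n → Fin b => ENNReal.ofReal (cY a (List.ofFn u)))).comp
    (measurable_pj n)

lemma cY_nonneg {a : List (Fin b) → ℝ} (ha : ∀ w, 0 ≤ a w) (w : List (Fin b)) : 0 ≤ cY a w :=
  Finset.prod_nonneg fun _ _ => ha _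

lemma cM_shift (n : ℕ) {a : List (Fin b) → ℝ} (ha : ∀ w, 0 ≤ a w) (ν : Measure (SymbSpace b))
    (w v : List (Fin b)) :
    cM (n + w.length) a (ν.restrict (cylinder (w ++ v))) =
      ENNReal.ofReal (cY a w) * cM n (fun u => a (w ++ u))
        ((ν.restrict (cylinder (w ++ v))).map (sh w.length)) := by
  unfold cM
  rw [lintegral_map (measurable_cY_wordPrefix _ _) (measurable_sh _),
    ← lintegral_const_mul (f := fun x => ENNReal.ofReal
        (cY (fun u => a (w ++ u)) (wordPrefix (sh w.length x) n))) _
      ((measurable_cY_wordPrefix n (fun u => a (w ++ u))).comp (measurable_sh w.length))]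
  refine setLIntegral_congr_fun (measurableSet_cylinder _) fun x hx => ?_
  have h1 := ((mem_cylinder_append w v x).1 hx).1
  rw [mem_cylinder_iff] at h1
  rw [add_comm, wordPrefix_add, h1, cY_append, ENNReal.ofReal_mul (cY_nonneg ha _)]

lemma cL_shift {a : List (Fin b) → ℝ} (ha : ∀ w, 0 ≤ a w) (ν : Measure (SymbSpace b))
    (w v : List (Fin b)) :
    cL a (ν.restrict (cylinder (w ++ v))) =
      ENNReal.ofReal (cY a w) * cL (fun u => a (w ++ u))
        ((ν.restrict (cylinder (w ++ v))).map (sh w.length)) := by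
  unfold cL
  rw [← liminf_nat_add _ w.length]
  simp only [cM_shift _ ha]
  rw [ENNReal.liminf_const_mul_of_ne_top ENNReal.ofReal_ne_top]

/-- Superadditivity of the lower limit. -/
lemma sum_cL_le (a : List (Fin b) → ℝ) (μ : Fin b → Measure (SymbSpace b)) :
    ∑ i, cL a (μ i) ≤ cL a (∑ i, μ i) := by
  have h := lintegral_liminf_le (u := atTop) (μ := (Measure.count : Measure (Fin b)))
    (f := fun n i => cM n a (μ i)) (fun n => measurable_of_finite _)
  simp only [lintegral_count, tsum_fintype] at h
  refine h.trans (le_of_eq ?_)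
  unfold cL
  congr 1
  funext n
  simp [cM, lintegral_finsetSum_measure]

lemma shiftMap_eq : shiftMap b = sh 1 := by
  funext x n; simp [shiftMap, sh, add_comm]

/-- Splitting the preimage of a cylinder. -/
lemma sum_map_restrict' (ν : Measure (SymbSpace b)) (v : List (Fin b)) :
    ∑ i : Fin b, (ν.restrict (cylinder ([i] ++ v))).map (sh 1) =
      (ν.map (sh 1)).restrict (cylinder v) := by
  ext s hs
  rw [Measure.finsetSum_apply, Measure.restrict_apply hs]
  have hm : MeasurableSet (s ∩ cylinder v) := hs.inter (measurableSet_cylinder v)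
  rw [Measure.map_apply (measurable_sh 1) hm]
  have : sh 1 ⁻¹' (s ∩ cylinder v) =
      ⋃ i ∈ (Finset.univ : Finset (Fin b)), (sh 1 ⁻¹' s ∩ cylinder ([i] ++ v)) := by
    ext x
    simp only [mem_preimage, mem_inter_iff, mem_iUnion, mem_cylinder_append, Finset.mem_univ,
      List.length_singleton]
    constructor
    · rintro ⟨h1, h2⟩
      exact ⟨x 0, trivial, h1, by simp [_root_.cylinder], h2⟩
    · rintro ⟨i, _, h1, _, h2⟩
      exact ⟨h1, h2⟩
  rw [this, measure_biUnion_finset]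
  · refine Finset.sum_congr rfl fun i _ => ?_
    rw [Measure.map_apply (measurable_sh 1) hs, Measure.restrict_apply (measurable_sh 1 hs)]
  · intro i _ j _ hij
    refine Set.disjoint_left.2 fun x hx hy => hij ?_
    have h1 := ((mem_cylinder_append [i] v x).1 hx.2).1
    have h2 := ((mem_cylinder_append [j] v x).1 hy.2).1
    simp [_root_.cylinder] at h1 h2
    exact h1.symm.trans h2
  · intro i _
    exact (measurable_sh 1 hs).inter (measurableSet_cylinder _)

lemma sum_map_restrict (ν : Measure (SymbSpace b)) (hν : MeasurePreserving (shiftMap b) ν ν)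
    (v : List (Fin b)) :
    ∑ i : Fin b, (ν.restrict (cylinder ([i] ++ v))).map (sh 1) = ν.restrict (cylinder v) := by
  rw [sum_map_restrict', ← shiftMap_eq, hν.map_eq]

lemma isPiSystem_cylinder : IsPiSystem (range (cylinder (b := b))) := by
  rintro _ ⟨w, rfl⟩ _ ⟨v, rfl⟩ ⟨x, hw, hv⟩
  have key : ∀ w v : List (Fin b), w.length ≤ v.length → x ∈ cylinder w → x ∈ cylinder v →
      cylinder v ⊆ cylinder w := by
    intro w v hl hw hv y hy
    rw [mem_cylinder_iff] at *
    obtain ⟨k, hk⟩ := Nat.exists_eq_add_of_le hl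
    rw [hk, wordPrefix_add] at hv hy
    rw [← hv] at hy
    have := (List.append_inj hy (by simp [length_wordPrefix])).1
    rw [this, hw]
  rcases le_total w.length v.length with h | h
  · exact ⟨v, (inter_eq_right.2 (key w v h hw hv)).symm⟩
  · exact ⟨w, (inter_eq_left.2 (key v w h hv hw)).symm⟩

lemma generateFrom_cylinder :
    (inferInstance : MeasurableSpace (SymbSpace b)) = .generateFrom (range (cylinder (b := b))) := by
  apply le_antisymm
  · change MeasurableSpace.pi ≤ _
    unfold MeasurableSpace.pi
    refine iSup_le fun i => ?_
    rintro _ ⟨t, -, rfl⟩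
    have : (fun x : SymbSpace b => x i) ⁻¹' t =
        ⋃ u ∈ {u : Fin (i + 1) → Fin b | u (Fin.last i) ∈ t}, cylinder (List.ofFn u) := by
      ext x
      simp only [mem_preimage, mem_iUnion, cylinder_ofFn, mem_ofPred_eq, mem_singleton_iff]
      constructor
      · intro h
        exact ⟨pj (i+1) x, by simpa [pj] using h, rfl⟩
      · rintro ⟨u, hu, rfl⟩
        simpa [pj] using hu
    rw [this]
    refine MeasurableSet.biUnion (Set.to_countable _) fun u _ => ?_
    exact MeasurableSpace.measurableSet_generateFrom ⟨_, rfl⟩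
  · refine MeasurableSpace.generateFrom_le ?_
    rintro _ ⟨w, rfl⟩
    exact measurableSet_cylinder w

lemma measure_pj_preimage (μ : Measure (SymbSpace b)) (n : ℕ) (S : Set (Fin n → Fin b)) :
    μ (pj n ⁻¹' S) = ∑ u : Fin n → Fin b, S.indicator (fun u => μ (cylinder (List.ofFn u))) u := by
  classical
  rw [← Measure.map_apply (measurable_pj n) (S.toFinite.measurableSet),
    ← lintegral_indicator_one (S.toFinite.measurableSet), lintegral_fintype]
  refine Finset.sum_congr rfl fun u _ => ?_
  rw [Measure.map_apply (measurable_pj n) (MeasurableSet.singleton _)]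
  by_cases h : u ∈ S <;> simp [h, cylinder_ofFn]

lemma sum_cylinder (μ : Measure (SymbSpace b)) (n : ℕ) :
    ∑ u : Fin n → Fin b, μ (cylinder (List.ofFn u)) = μ univ := by
  have := measure_pj_preimage μ n univ
  simpa using this.symm

/-- Domination on cylinders implies domination. -/
lemma le_of_cylinder_le (μ ν : Measure (SymbSpace b)) [IsFiniteMeasure μ] [IsFiniteMeasure ν]
    (h : ∀ w, μ (cylinder w) ≤ ν (cylinder w)) : μ ≤ ν := by
  have hopen : ∀ U : Set (SymbSpace b), IsOpen U → μ U ≤ ν U := by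
    intro U hU
    let S : (n : ℕ) → Set (Fin n → Fin b) := fun n => {u | cylinder (List.ofFn u) ⊆ U}
    have hmono : Monotone fun n => pj (b := b) n ⁻¹' S n := by
      intro n m hnm x hx
      refine Subset.trans ?_ hx
      intro y hy
      rw [cylinder_ofFn] at hy ⊢
      funext i
      exact congrFun hy (Fin.castLE hnm i)
    have hun : U = ⋃ n, pj (b := b) n ⁻¹' S n := by
      apply subset_antisymm
      · intro x hx
        obtain ⟨I, u, hu, hIu⟩ := isOpen_pi_iff.1 hU x hx
        obtain ⟨N, hN⟩ : ∃ N, ∀ i ∈ I, i < N := ⟨I.sup id + 1, fun i hi =>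
          Nat.lt_succ_of_le (Finset.le_sup (f := id) hi)⟩
        refine mem_iUnion.2 ⟨N, ?_⟩
        intro y hy
        rw [cylinder_ofFn] at hy
        apply hIu
        intro i hi
        have : y i = x i := congrFun hy ⟨i, hN i hi⟩
        rw [this]
        exact (hu i hi).2
      · refine iUnion_subset fun n x hx => hx ?_
        rw [cylinder_ofFn]; rfl
    rw [hun, hmono.measure_iUnion, hmono.measure_iUnion]
    refine iSup_mono fun n => ?_
    rw [measure_pj_preimage, measure_pj_preimage]
    refine Finset.sum_le_sum fun u _ => ?_
    exact Set.indicator_le_indicator (h _)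
  refine Measure.le_iff.2 fun s _ => ?_
  rw [s.measure_eq_iInf_isOpen ν]
  refine le_iInf₂ fun U hsU => le_iInf fun hU => ?_
  exact (measure_mono hsU).trans (hopen U hU)

end Cascade

/-! ### Probabilistic part -/

section Prob

variable {b : ℕ} {Ω : Type*}

/-- σ-algebra of the weights up to generation `n`. -/
@[reducible] def cF (X : List (Fin b) → Ω → ℝ) (n : ℕ) : MeasurableSpace Ω :=
  ⨆ w ∈ {w : {w : List (Fin b) // w ≠ []} | w.1.length ≤ n},
    MeasurableSpace.comap (X w.1) inferInstance

/-- σ-algebra of the weights after generation `n`. -/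
@[reducible] def cG (X : List (Fin b) → Ω → ℝ) (n : ℕ) : MeasurableSpace Ω :=
  ⨆ w ∈ {w : {w : List (Fin b) // w ≠ []} | n < w.1.length},
    MeasurableSpace.comap (X w.1) inferInstance

lemma measurable_cF (X : List (Fin b) → Ω → ℝ) {n : ℕ} {u : List (Fin b)} (hu : u ≠ [])
    (hn : u.length ≤ n) : Measurable[cF X n] (X u) := by
  rw [measurable_iff_comap_le]
  exact le_iSup₂_of_le (f := fun (w : {w : List (Fin b) // w ≠ []})
    (_ : w ∈ {w : {w : List (Fin b) // w ≠ []} | w.1.length ≤ n}) =>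
      MeasurableSpace.comap (X w.1) inferInstance) ⟨u, hu⟩ hn le_rfl

lemma measurable_cG (X : List (Fin b) → Ω → ℝ) {n : ℕ} {u : List (Fin b)} (hu : u ≠ [])
    (hn : n < u.length) : Measurable[cG X n] (X u) := by
  rw [measurable_iff_comap_le]
  exact le_iSup₂_of_le (f := fun (w : {w : List (Fin b) // w ≠ []})
    (_ : w ∈ {w : {w : List (Fin b) // w ≠ []} | n < w.1.length}) =>
      MeasurableSpace.comap (X w.1) inferInstance) ⟨u, hu⟩ hn le_rfl

lemma measurable_cY (m : MeasurableSpace Ω) (X : List (Fin b) → Ω → ℝ) (w : List (Fin b))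
    (h : ∀ u, u ≠ [] → u.length ≤ w.length → Measurable[m] (X u)) :
    Measurable[m] fun ω => cY (fun u => X u ω) w := by
  unfold cY
  refine Finset.measurable_prod _ fun k hk => h _ ?_ ?_
  · rw [Finset.mem_range] at hk
    intro h0
    have := congrArg List.length h0
    simp only [List.length_take, List.length_nil] at this
    omega
  · simp

lemma measurable_cM (m : MeasurableSpace Ω) (X : List (Fin b) → Ω → ℝ) (n : ℕ)
    (μ : Measure (SymbSpace b))
    (h : ∀ u, u ≠ [] → u.length ≤ n → Measurable[m] (X u)) :
    Measurable[m] fun ω => cM n (fun u => X u ω) μ := by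
  simp only [cM_eq_sum]
  refine Finset.measurable_sum _ fun u _ => ?_
  refine Measurable.mul_const (Measurable.ennreal_ofReal (measurable_cY m X _ ?_)) _
  intro v hv hl
  exact h v hv (by simpa using hl)

lemma measurable_cL (m : MeasurableSpace Ω) (X : List (Fin b) → Ω → ℝ)
    (μ : Measure (SymbSpace b)) (h : ∀ u, u ≠ [] → Measurable[m] (X u)) :
    Measurable[m] fun ω => cL (fun u => X u ω) μ := by
  unfold cL
  exact Measurable.liminf fun n => measurable_cM m X n μ fun u hu _ => h u hu

variable [mΩ : MeasurableSpace Ω] {P : Measure Ω} {X : List (Fin b) → Ω → ℝ} {X₀ : Ω → ℝ}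

lemma cF_le (hM1 : CascadeM1 P X X₀) (n : ℕ) : cF X n ≤ mΩ :=
  iSup₂_le fun w _ => (hM1.meas w.1).comap_le

lemma cG_le (hM1 : CascadeM1 P X X₀) (n : ℕ) : cG X n ≤ mΩ :=
  iSup₂_le fun w _ => (hM1.meas w.1).comap_le

lemma indep_cF_cG (hM1 : CascadeM1 P X X₀) (n : ℕ) : Indep (cF X n) (cG X n) P := by
  have hi : iIndep (fun w : {w : List (Fin b) // w ≠ []} =>
      MeasurableSpace.comap (X w.1) inferInstance) P := hM1.indep
  have hd : Disjoint {w : {w : List (Fin b) // w ≠ []} | w.1.length ≤ n}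
      {w : {w : List (Fin b) // w ≠ []} | n < w.1.length} := by
    refine Set.disjoint_left.2 fun w h1 h2 => ?_
    exact absurd (show w.1.length ≤ n from h1) (not_le.2 (show n < w.1.length from h2))
  have hle : ∀ w : {w : List (Fin b) // w ≠ []},
      MeasurableSpace.comap (X w.1) inferInstance ≤ mΩ := fun w => (hM1.meas w.1).comap_le
  exact indep_iSup_of_disjoint hle hi hd

lemma lintegral_X (hM1 : CascadeM1 P X X₀) {w : List (Fin b)} (hw : w ≠ []) :
    ∫⁻ ω, ENNReal.ofReal (X w ω) ∂P = 1 := by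
  have h1 : Integrable X₀ P := by
    by_contra h
    have := hM1.mean₀
    rw [integral_undef h] at this
    exact zero_ne_one this
  have h2 : Integrable (X w) P := (hM1.ident w hw).integrable_iff.2 h1
  rw [← ofReal_integral_eq_lintegral_ofReal h2 (ae_of_all _ (hM1.nonneg w)),
    (hM1.ident w hw).integral_eq, hM1.mean₀, ENNReal.ofReal_one]

lemma lintegral_cY [IsProbabilityMeasure P] (hM1 : CascadeM1 P X X₀) (w : List (Fin b)) :
    ∫⁻ ω, ENNReal.ofReal (cY (fun u => X u ω) w) ∂P = 1 := by
  induction w using List.reverseRecOn with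
  | nil => simp [cY]
  | append_singleton w i ih =>
    have h1 : ∀ ω, ENNReal.ofReal (cY (fun u => X u ω) (w ++ [i])) =
        ENNReal.ofReal (cY (fun u => X u ω) w) * ENNReal.ofReal (X (w ++ [i]) ω) := by
      intro ω
      rw [cY_append, ENNReal.ofReal_mul (cY_nonneg (fun u => hM1.nonneg u ω) _)]
      simp [cY]
    simp only [h1]
    rw [lintegral_mul_eq_lintegral_mul_lintegral_of_independent_measurableSpace
      (cF_le hM1 w.length) (cG_le hM1 w.length) (indep_cF_cG hM1 w.length), ih,
      lintegral_X hM1 (by simp), one_mul]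
    · exact Measurable.ennreal_ofReal
        (measurable_cY _ X w fun u hu hl => measurable_cF X hu hl)
    · exact Measurable.ennreal_ofReal (measurable_cG X (by simp) (by simp))

lemma setLIntegral_cL (hM1 : CascadeM1 P X X₀) (ν : Measure (SymbSpace b)) (w v : List (Fin b))
    {A : Set Ω} (hA : MeasurableSet[cF X w.length] A) :
    ∫⁻ ω in A, cL (fun u => X u ω) (ν.restrict (cylinder (w ++ v))) ∂P =
      (∫⁻ ω in A, ENNReal.ofReal (cY (fun u => X u ω) w) ∂P) *
        ∫⁻ ω, cL (fun u => X (w ++ u) ω)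
          ((ν.restrict (cylinder (w ++ v))).map (sh w.length)) ∂P := by
  have hA' : MeasurableSet A := cF_le hM1 _ _ hA
  rw [← lintegral_indicator hA', ← lintegral_indicator hA']
  rw [← lintegral_mul_eq_lintegral_mul_lintegral_of_independent_measurableSpace
      (cF_le hM1 w.length) (cG_le hM1 w.length) (indep_cF_cG hM1 w.length)]
  · refine lintegral_congr fun ω => ?_
    by_cases h : ω ∈ A
    · simp only [indicator_of_mem h]
      exact cL_shift (fun u => hM1.nonneg u ω) ν w v
    · simp [indicator_of_notMem h]
  · exact Measurable.indicator (Measurable.ennreal_ofReal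
        (measurable_cY _ X w fun u hu hl => measurable_cF X hu hl)) hA
  · refine measurable_cL _ (fun u => X (w ++ u)) _ fun u hu => ?_
    refine measurable_cG X (by simp [hu]) ?_
    have := List.length_pos_of_ne_nil hu
    simp; omega

lemma lintegral_cL [IsProbabilityMeasure P] (hM1 : CascadeM1 P X X₀)
    (ν : Measure (SymbSpace b)) (w v : List (Fin b)) :
    ∫⁻ ω, cL (fun u => X u ω) (ν.restrict (cylinder (w ++ v))) ∂P =
        ∫⁻ ω, cL (fun u => X (w ++ u) ω)
          ((ν.restrict (cylinder (w ++ v))).map (sh w.length)) ∂P := by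
  have := setLIntegral_cL hM1 ν w v (A := univ) MeasurableSet.univ
  simpa [lintegral_cY hM1] using this

/-- Extension of an array indexed by nonempty words. -/
def ext0 (ξ : {w : List (Fin b) // w ≠ []} → ℝ) (w : List (Fin b)) : ℝ :=
  if h : w ≠ [] then ξ ⟨w, h⟩ else 0

lemma cY_congr {a a' : List (Fin b) → ℝ} (h : ∀ u, u ≠ [] → a u = a' u) : cY a = cY a' := by
  funext w
  unfold cY
  refine Finset.prod_congr rfl fun k hk => h _ ?_
  rw [Finset.mem_range] at hk
  intro h0
  have := congrArg List.length h0
  simp only [List.length_take, List.length_nil] at this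
  omega

lemma cL_congr {a a' : List (Fin b) → ℝ} (h : ∀ u, u ≠ [] → a u = a' u)
    (μ : Measure (SymbSpace b)) : cL a μ = cL a' μ := by
  unfold cL cM
  rw [cY_congr h]

lemma lintegral_cL_eq_map (X : List (Fin b) → Ω → ℝ) (hX : ∀ u, Measurable (X u))
    (μ : Measure (SymbSpace b)) :
    ∫⁻ ω, cL (fun u => X u ω) μ ∂P =
      ∫⁻ ξ, cL (ext0 ξ) μ
        ∂(P.map fun ω (w : {w : List (Fin b) // w ≠ []}) => X w.1 ω) := by
  rw [lintegral_map]
  · refine lintegral_congr fun ω => cL_congr (fun u hu => ?_) μ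
    simp [ext0, hu]
  · refine measurable_cL _ (fun u ξ => ext0 ξ u) μ fun u hu => ?_
    simp only [ext0, hu, ne_eq, not_false_eq_true, dite_true]
    fun_prop
  · exact measurable_pi_lambda _ fun w => hX w.1

lemma lintegral_cL_subtree (hM1 : CascadeM1 P X X₀)
    (μ : Measure (SymbSpace b)) (w : List (Fin b)) :
    ∫⁻ ω, cL (fun u => X (w ++ u) ω) μ ∂P = ∫⁻ ω, cL (fun u => X u ω) μ ∂P := by
  rw [lintegral_cL_eq_map X hM1.meas, lintegral_cL_eq_map (fun u => X (w ++ u))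
    (fun u => hM1.meas _)]
  congr 1
  have h1 := iIndepFun.map_fun_eq_infinitePi_map (fun w : {w : List (Fin b) // w ≠ []} => hM1.meas w.1) hM1.indep
  have hg : Function.Injective (fun v : {v : List (Fin b) // v ≠ []} =>
      (⟨w ++ v.1, by simp [v.2]⟩ : {v : List (Fin b) // v ≠ []})) := by
    intro u v h
    simpa [Subtype.ext_iff] using h
  have h2 := iIndepFun.map_fun_eq_infinitePi_map (fun v : {v : List (Fin b) // v ≠ []} => hM1.meas (w ++ v.1))
    (hM1.indep.precomp hg)
  refine h2.trans (Eq.trans ?_ h1.symm)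
  congr 1
  funext v
  exact ((hM1.ident (w ++ v.1) (by simp [v.2])).trans (hM1.ident v.1 v.2).symm).map_eq

lemma lintegral_cM [IsProbabilityMeasure P] (hM1 : CascadeM1 P X X₀)
    (μ : Measure (SymbSpace b)) (n : ℕ) :
    ∫⁻ ω, cM n (fun u => X u ω) μ ∂P = μ univ := by
  simp only [cM_eq_sum]
  rw [lintegral_finsetSum]
  · rw [← sum_cylinder μ n]
    refine Finset.sum_congr rfl fun u _ => ?_
    rw [lintegral_mul_const, lintegral_cY hM1, one_mul]
    exact Measurable.ennreal_ofReal (measurable_cY _ X _ fun u _ _ => hM1.meas u)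
  · intro u _
    exact Measurable.mul_const (Measurable.ennreal_ofReal
      (measurable_cY _ X _ fun u _ _ => hM1.meas u)) _

lemma lintegral_cL_le [IsProbabilityMeasure P] (hM1 : CascadeM1 P X X₀)
    (μ : Measure (SymbSpace b)) :
    ∫⁻ ω, cL (fun u => X u ω) μ ∂P ≤ μ univ := by
  refine (lintegral_liminf_le fun n => measurable_cM _ X n μ fun u _ _ => hM1.meas u).trans ?_
  simp [lintegral_cM hM1]

lemma sum_lintegral_cL_le [IsProbabilityMeasure P] (hM1 : CascadeM1 P X X₀)
    (ν : Measure (SymbSpace b)) (hν : MeasurePreserving (shiftMap b) ν ν) (v : List (Fin b)) :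
    ∑ i : Fin b, ∫⁻ ω, cL (fun u => X u ω) (ν.restrict (cylinder ([i] ++ v))) ∂P ≤
      ∫⁻ ω, cL (fun u => X u ω) (ν.restrict (cylinder v)) ∂P := by
  simp only [lintegral_cL hM1, lintegral_cL_subtree hM1]
  rw [← lintegral_finsetSum _ fun i _ => measurable_cL _ X _ fun u _ => hM1.meas u]
  refine lintegral_mono fun ω => ?_
  refine (sum_cL_le _ _).trans (le_of_eq ?_)
  rw [← sum_map_restrict ν hν v]
  rfl

end Prob

/-! ### The dichotomy -/

section Dichotomy

variable {b : ℕ} {Ω : Type*} [mΩ : MeasurableSpace Ω] {P : Measure Ω}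
  {X : List (Fin b) → Ω → ℝ} {X₀ : Ω → ℝ}

lemma ae_Q_eq (ν : Measure (SymbSpace b)) (Qν : Ω → Measure (SymbSpace b))
    (hQν : ∀ᵐ ω ∂P, ∀ w : List (Fin b),
      Tendsto (fun n => ∫⁻ x in cylinder w, ENNReal.ofReal (cascadeY X (wordPrefix x n) ω) ∂ν)
        atTop (nhds (Qν ω (cylinder w)))) :
    ∀ᵐ ω ∂P, ∀ w : List (Fin b),
      Qν ω (cylinder w) = cL (fun u => X u ω) (ν.restrict (cylinder w)) := by
  filter_upwards [hQν] with ω h w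
  exact (h w).liminf_eq.symm

lemma ae_Q_univ_lt_top [IsProbabilityMeasure P] (hM1 : CascadeM1 P X X₀)
    (ν : Measure (SymbSpace b)) [IsProbabilityMeasure ν] (Qν : Ω → Measure (SymbSpace b))
    (hQ : ∀ᵐ ω ∂P, ∀ w : List (Fin b),
      Qν ω (cylinder w) = cL (fun u => X u ω) (ν.restrict (cylinder w))) :
    ∀ᵐ ω ∂P, Qν ω univ < ∞ := by
  have h1 := lintegral_cL_le hM1 ν
  have h2 : ∀ᵐ ω ∂P, cL (fun u => X u ω) ν < ∞ := by
    refine ae_lt_top (measurable_cL _ X ν fun u _ => hM1.meas u) (ne_of_lt (h1.trans_lt ?_))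
    simp
  filter_upwards [hQ, h2] with ω h h'
  have := h []
  rw [cylinder_nil, Measure.restrict_univ] at this
  rwa [this]

/-- The expected measure. -/
lemma exists_mean [IsProbabilityMeasure P] (hM1 : CascadeM1 P X X₀)
    (ν : Measure (SymbSpace b)) [IsProbabilityMeasure ν] (Qν : Ω → Measure (SymbSpace b))
    (hQ : ∀ᵐ ω ∂P, ∀ w : List (Fin b),
      Qν ω (cylinder w) = cL (fun u => X u ω) (ν.restrict (cylinder w))) :
    ∃ T : Measure (SymbSpace b), ∀ w,
      T (cylinder w) = ∫⁻ ω, cL (fun u => X u ω) (ν.restrict (cylinder w)) ∂P := by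
  classical
  have hae := hQ.and (ae_Q_univ_lt_top hM1 ν Qν hQ)
  obtain ⟨N, hsub, hN, hN0⟩ := exists_measurable_superset_of_null (ae_iff.1 hae)
  have hgood : ∀ ω, ω ∉ N → (∀ w, Qν ω (cylinder w) =
      cL (fun u => X u ω) (ν.restrict (cylinder w))) ∧ Qν ω univ < ∞ := by
    intro ω hω
    by_contra h
    exact hω (hsub h)
  let Q' : Ω → Measure (SymbSpace b) := fun ω => if ω ∈ N then 0 else Qν ω
  have hfin : ∀ ω, IsFiniteMeasure (Q' ω) := by
    intro ω
    by_cases h : ω ∈ N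
    · simp only [Q', h, if_true]; infer_instance
    · simp only [Q', h, if_false]; exact ⟨(hgood ω h).2⟩
  have hcyl : ∀ w, (fun ω => Q' ω (cylinder w)) =
      fun ω => if ω ∈ N then 0 else cL (fun u => X u ω) (ν.restrict (cylinder w)) := by
    intro w
    funext ω
    by_cases h : ω ∈ N
    · simp [Q', h]
    · simp [Q', h, (hgood ω h).1]
  have hcm : ∀ w, Measurable (fun ω => Q' ω (cylinder w)) := by
    intro w
    rw [hcyl]
    exact Measurable.ite hN measurable_const (measurable_cL _ X _ fun u _ => hM1.meas u)
  have hQm : Measurable Q' := by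
    refine Measurable.measure_of_isPiSystem generateFrom_cylinder isPiSystem_cylinder ?_ ?_
    · rintro _ ⟨w, rfl⟩
      exact hcm w
    · rw [← cylinder_nil]
      exact hcm []
  refine ⟨P.bind Q', fun w => ?_⟩
  rw [Measure.bind_apply (measurableSet_cylinder w) hQm.aemeasurable, hcyl]
  refine lintegral_congr_ae ?_
  have : ∀ᵐ ω ∂P, ω ∉ N := measure_eq_zero_iff_ae_notMem.1 hN0
  filter_upwards [this] with ω h
  simp [h]

lemma exists_cascade_const [IsProbabilityMeasure P] (hM1 : CascadeM1 P X X₀)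
    (ν : Measure (SymbSpace b)) [IsProbabilityMeasure ν] (hν : Ergodic (shiftMap b) ν)
    (Qν : Ω → Measure (SymbSpace b))
    (hQ : ∀ᵐ ω ∂P, ∀ w : List (Fin b),
      Qν ω (cylinder w) = cL (fun u => X u ω) (ν.restrict (cylinder w))) :
    ∃ c : ℝ≥0∞, c ≠ ∞ ∧ ∀ w,
      ∫⁻ ω, cL (fun u => X u ω) (ν.restrict (cylinder w)) ∂P = c * ν (cylinder w) := by
  obtain ⟨T, hT⟩ := exists_mean hM1 ν Qν hQ
  have hle : ∀ w, T (cylinder w) ≤ ν (cylinder w) := by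
    intro w
    rw [hT]
    simpa using lintegral_cL_le hM1 (ν.restrict (cylinder w))
  have hfin : IsFiniteMeasure T := by
    have := hle []
    rw [cylinder_nil] at this
    exact ⟨this.trans_lt (measure_lt_top _ _)⟩
  have hTν : T ≤ ν := le_of_cylinder_le _ _ hle
  have hinv : T.map (sh 1) ≤ T := by
    refine le_of_cylinder_le _ _ fun v => ?_
    have h1 := congrArg (fun μ : Measure (SymbSpace b) => μ univ) (sum_map_restrict' T v)
    simp only [Measure.finsetSum_apply, Measure.restrict_apply MeasurableSet.univ,
      univ_inter, Measure.map_apply (measurable_sh 1) MeasurableSet.univ, preimage_univ] at h1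
    rw [← h1, hT]
    simp only [hT]
    exact sum_lintegral_cL_le hM1 ν hν.toMeasurePreserving v
  have heq : T.map (sh 1) = T := by
    refine Measure.eq_of_le_of_measure_univ_eq hinv ?_
    rw [Measure.map_apply (measurable_sh 1) MeasurableSet.univ, preimage_univ]
  have hmp : MeasurePreserving (shiftMap b) T T := by
    rw [shiftMap_eq]
    exact ⟨measurable_sh 1, heq⟩
  obtain ⟨c, hc⟩ := hν.eq_smul_of_absolutelyContinuous hmp (Measure.absolutelyContinuous_of_le hTν)
  refine ⟨c, ?_, fun w => ?_⟩
  · have h1 : T univ = c := by rw [hc]; simp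
    rw [← h1]
    exact measure_ne_top _ _
  · rw [← hT, hc]; simp

lemma setLIntegral_eq [IsProbabilityMeasure P] (hM1 : CascadeM1 P X X₀)
    (ν : Measure (SymbSpace b)) [IsProbabilityMeasure ν]
    (Qν : Ω → Measure (SymbSpace b))
    (hQ : ∀ᵐ ω ∂P, ∀ w : List (Fin b),
      Qν ω (cylinder w) = cL (fun u => X u ω) (ν.restrict (cylinder w)))
    (c : ℝ≥0∞) (hc : ∀ w,
      ∫⁻ ω, cL (fun u => X u ω) (ν.restrict (cylinder w)) ∂P = c * ν (cylinder w))
    (n : ℕ) {A : Set Ω} (hA : MeasurableSet[cF X n] A) :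
    ∫⁻ ω in A, cL (fun u => X u ω) ν ∂P = c * ∫⁻ ω in A, cM n (fun u => X u ω) ν ∂P := by
  have h1 : ∀ᵐ ω ∂P, cL (fun u => X u ω) ν = ∑ u : Fin n → Fin b,
      cL (fun u => X u ω) (ν.restrict (cylinder (List.ofFn u))) := by
    filter_upwards [hQ] with ω h
    have h0 := h []
    rw [cylinder_nil, Measure.restrict_univ] at h0
    simp only [← h, ← h0]
    exact (sum_cylinder _ n).symm
  rw [lintegral_congr_ae (ae_restrict_of_ae h1),
    lintegral_finsetSum _ fun u _ => measurable_cL _ X _ fun u _ => hM1.meas u]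
  simp only [cM_eq_sum]
  have hm : ∀ w : List (Fin b), Measurable fun ω => ENNReal.ofReal (cY (fun u => X u ω) w) :=
    fun w => Measurable.ennreal_ofReal (measurable_cY _ X w fun u _ _ => hM1.meas u)
  rw [lintegral_finsetSum _ fun u _ => (hm _).mul_const _, Finset.mul_sum]
  refine Finset.sum_congr rfl fun u _ => ?_
  have hlen : (List.ofFn u).length = n := by simp
  have h2 := setLIntegral_cL hM1 ν (List.ofFn u) [] (A := A) (by rw [hlen]; exact hA)
  rw [← lintegral_cL hM1] at h2
  simp only [List.append_nil] at h2
  rw [h2, hc, lintegral_mul_const _ (hm _)]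
  ring

/-- The filtration of the cascade. -/
def cFil (hM1 : CascadeM1 P X X₀) : Filtration ℕ mΩ where
  seq n := cF X n
  mono' i j hij := by
    refine iSup₂_le fun w hw => ?_
    exact measurable_iff_comap_le.1 (measurable_cF X w.2 (le_trans hw hij))
  le' n := cF_le hM1 n

lemma cascadeZ_eq (hM1 : CascadeM1 P X X₀) (ν : Measure (SymbSpace b)) [IsProbabilityMeasure ν]
    (n : ℕ) (ω : Ω) : cascadeZ X ν n ω = (cM n (fun u => X u ω) ν).toReal := by
  rw [cM_eq_sum, ENNReal.toReal_sum]
  · unfold cascadeZ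
    refine Finset.sum_congr rfl fun u _ => ?_
    rw [ENNReal.toReal_mul, ENNReal.toReal_ofReal (cY_nonneg (fun u => hM1.nonneg u ω) _)]
    rfl
  · intro u _
    exact ENNReal.mul_ne_top ENNReal.ofReal_ne_top (measure_ne_top _ _)

lemma cM_ne_top (a : List (Fin b) → ℝ) (ν : Measure (SymbSpace b)) [IsProbabilityMeasure ν]
    (n : ℕ) : cM n a ν ≠ ∞ := by
  rw [cM_eq_sum]
  refine ENNReal.sum_ne_top.2 fun u _ => ?_
  exact ENNReal.mul_ne_top ENNReal.ofReal_ne_top (measure_ne_top _ _)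

lemma condExp_eq [IsProbabilityMeasure P] (hM1 : CascadeM1 P X X₀)
    (ν : Measure (SymbSpace b)) [IsProbabilityMeasure ν]
    (Qν : Ω → Measure (SymbSpace b))
    (hQ : ∀ᵐ ω ∂P, ∀ w : List (Fin b),
      Qν ω (cylinder w) = cL (fun u => X u ω) (ν.restrict (cylinder w)))
    (c : ℝ≥0∞) (hc : ∀ w,
      ∫⁻ ω, cL (fun u => X u ω) (ν.restrict (cylinder w)) ∂P = c * ν (cylinder w))
    (hZ : Integrable (fun ω => (cL (fun u => X u ω) ν).toReal) P)
    (hfin : ∀ᵐ ω ∂P, cL (fun u => X u ω) ν < ∞) (n : ℕ) :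
    (fun ω => c.toReal * cascadeZ X ν n ω) =ᵐ[P]
      P[(fun ω => (cL (fun u => X u ω) ν).toReal) | cFil hM1 n] := by
  have hmF : Measurable[cF X n] fun ω => cM n (fun u => X u ω) ν :=
    measurable_cM _ X n ν fun u hu hl => measurable_cF X hu hl
  have hmM : Measurable fun ω => cM n (fun u => X u ω) ν := hmF.mono (cF_le hM1 n) le_rfl
  have hint : Integrable (fun ω => (cM n (fun u => X u ω) ν).toReal) P := by
    refine integrable_toReal_of_lintegral_ne_top hmM.aemeasurable ?_
    rw [lintegral_cM hM1]
    exact measure_ne_top _ _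
  simp only [cascadeZ_eq hM1]
  refine ae_eq_condExp_of_forall_setIntegral_eq ((cFil hM1).le n) hZ ?_ ?_ ?_
  · intro s _ _
    exact (hint.const_mul _).integrableOn
  · intro s hs _
    rw [integral_const_mul, integral_toReal hmM.aemeasurable
      (ae_of_all _ fun ω => (cM_ne_top _ ν n).lt_top),
      integral_toReal (measurable_cL _ X ν fun u _ => hM1.meas u).aemeasurable
        (ae_restrict_of_ae hfin), setLIntegral_eq hM1 ν Qν hQ c hc n hs, ENNReal.toReal_mul]
  · refine StronglyMeasurable.aestronglyMeasurable (Measurable.stronglyMeasurable ?_)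
    exact Measurable.const_mul (Measurable.ennreal_toReal hmF) _

end Dichotomy

/-- **Proposition (dichotomy for ergodic measures).** Let `Q` be a Mandelbrot
multiplicative cascade (assumption (M1)) acting on a Borel probability measure `ν` on `Σ`
which is ergodic for the left shift, and let `Q·ν` denote the almost-sure weak limit of the
cascade measures (characterised by convergence on cylinders). Then `ν` is either
`Q`-regular (the martingale `(Z_n)` is uniformly integrable) or `Q`-singular
(`Q·ν = 0` almost surely). -/
theorem ergodic_measure_regular_or_singular
    {b : ℕ} (hb : 2 ≤ b)
    {Ω : Type*} [MeasurableSpace Ω] (P : Measure Ω) [IsProbabilityMeasure P]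
    (X : List (Fin b) → Ω → ℝ) (X₀ : Ω → ℝ)
    (hM1 : CascadeM1 P X X₀)
    (ν : Measure (SymbSpace b)) [IsProbabilityMeasure ν]
    (hν : Ergodic (shiftMap b) ν)
    (Qν : Ω → Measure (SymbSpace b))
    (hQν : ∀ᵐ ω ∂P, ∀ w : List (Fin b),
      Tendsto (fun n => ∫⁻ x in cylinder w, ENNReal.ofReal (cascadeY X (wordPrefix x n) ω) ∂ν)
        atTop (nhds (Qν ω (cylinder w)))) :
    UniformIntegrable (fun n ω => cascadeZ X ν n ω) 1 P ∨ (∀ᵐ ω ∂P, Qν ω = 0) := by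
  have hQ := ae_Q_eq ν Qν hQν
  have hQfin := ae_Q_univ_lt_top hM1 ν Qν hQ
  obtain ⟨c, hctop, hc⟩ := exists_cascade_const hM1 ν hν Qν hQ
  have hQL : ∀ᵐ ω ∂P, Qν ω univ = cL (fun u => X u ω) ν := by
    filter_upwards [hQ] with ω h
    have h0 := h []
    rwa [cylinder_nil, Measure.restrict_univ] at h0
  have hfin : ∀ᵐ ω ∂P, cL (fun u => X u ω) ν < ∞ := by
    filter_upwards [hQL, hQfin] with ω h h'
    rwa [← h]
  have hZ : Integrable (fun ω => (cL (fun u => X u ω) ν).toReal) P := by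
    refine integrable_toReal_of_lintegral_ne_top
      (measurable_cL _ X ν fun u _ => hM1.meas u).aemeasurable ?_
    exact ne_of_lt ((lintegral_cL_le hM1 ν).trans_lt (measure_lt_top _ _))
  have hcond := condExp_eq hM1 ν Qν hQ c hc hZ hfin
  by_cases hc1 : c = 1
  · left
    have hUI := hZ.uniformIntegrable_condExp (fun n => (cFil hM1).le n)
    refine hUI.ae_eq fun n => ?_
    refine (hcond n).symm.trans ?_
    simp [hc1]
  · right
    have hmeas : StronglyMeasurable[⨆ n, cFil hM1 n]
        (fun ω => (cL (fun u => X u ω) ν).toReal) := by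
      refine Measurable.stronglyMeasurable (Measurable.ennreal_toReal ?_)
      refine measurable_cL _ X ν fun u hu => ?_
      exact (measurable_cF X hu le_rfl).mono (le_iSup (fun n => cFil hM1 n) u.length) le_rfl
    have hlim := hZ.tendsto_ae_condExp hmeas
    have hall : ∀ᵐ ω ∂P, ∀ n, c.toReal * cascadeZ X ν n ω =
        (P[(fun ω => (cL (fun u => X u ω) ν).toReal) | cFil hM1 n]) ω := ae_all_iff.2 hcond
    filter_upwards [hQν, hQL, hQfin, hlim, hall] with ω h1 h2 h3 h4 h5
    have h1' := h1 []
    rw [cylinder_nil, Measure.restrict_univ] at h1'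
    have h6 : Tendsto (fun n => cascadeZ X ν n ω) atTop (nhds (Qν ω univ).toReal) := by
      simp only [cascadeZ_eq hM1]
      exact (ENNReal.tendsto_toReal h3.ne).comp h1'
    simp only [← h5, ← h2] at h4
    have h7 := tendsto_nhds_unique h4 (h6.const_mul c.toReal)
    have h8 : (Qν ω univ).toReal = 0 := by
      by_contra h
      have h9 : c.toReal = 1 := by
        have : (1 - c.toReal) * (Qν ω univ).toReal = 0 := by linarith
        rcases mul_eq_zero.1 this with h | h'
        · linarith
        · exact absurd h' h
      exact hc1 (by rw [← ENNReal.ofReal_toReal hctop, h9, ENNReal.ofReal_one])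
    rw [ENNReal.toReal_eq_zero_iff] at h8
    rcases h8 with h8 | h8
    · exact Measure.measure_univ_eq_zero.1 h8
    · exact absurd h8 h3.ne

end
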